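/- Ex-post approximation guarantee for the Relaxed Foresight Algorithm (quadratic follower): for every leader decision x ∈ X and every integer follower optimum y at x, the leader's value obtained by the algorithm satisfies h(x*) + d_x(y*) ≤ h(x) + d_x(y) + L₂·(ρ + ‖y* − ŷ(x*)‖₂). In particular, the algorithm's leader objective exceeds the optimal leader objective of the bilevel program by at most L₂·(ρ + ‖y* − ŷ(x*)‖₂). -/

import Mathlib

open Matrix BigOperators

/-!
Moving from `(x*, y*)` to `(x*, ŷ(x*))` and from `(x, ŷ(x))` to `(x, y)` costs one Lipschitz term
each, while passing from `(x*, ŷ(x*))` to `(x, ŷ(x))` is free by optimality of `x*` for the relaxed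
problem. The step from `(x, ŷ(x))` to `(x, y)` has length at most `ρ` by proximity.
-/

open scoped NNReal ENNReal

section MetricFollower

variable {α E : Type*} [PseudoMetricSpace E] {X : Set α} {f : α → E → ℝ} {L : ℝ≥0}
  {relaxed : α → E} {xstar : α}

theorem le_add_mul_dist_add_dist_of_isMinOn_relaxed (hf : ∀ x ∈ X, LipschitzWith L (f x))
    (hxstar : xstar ∈ X) (hmin : IsMinOn (fun x ↦ f x (relaxed x)) X xstar) (ystar : E)
    {x : α} (hx : x ∈ X) (y : E) :
    f xstar ystar ≤ f x y + L * (dist y (relaxed x) + dist ystar (relaxed xstar)) :=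
  calc
    f xstar ystar ≤ f xstar (relaxed xstar) + L * dist ystar (relaxed xstar) :=
      (hf xstar hxstar).le_add_mul _ _
    _ ≤ f x (relaxed x) + L * dist ystar (relaxed xstar) := by
      gcongr
      exact hmin hx
    _ ≤ f x y + L * dist y (relaxed x) + L * dist ystar (relaxed xstar) := by
      gcongr
      rw [dist_comm]
      exact (hf x hx).le_add_mul _ _
    _ = f x y + L * (dist y (relaxed x) + dist ystar (relaxed xstar)) := by ring

theorem relaxed_foresight_ex_post_guarantee_general {response : α → Set E} {ρ : ℝ}
    (hf : ∀ x ∈ X, LipschitzWith L (f x))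
    (hprox : ∀ x ∈ X, ∀ y ∈ response x, dist y (relaxed x) ≤ ρ)
    (hxstar : xstar ∈ X) (hmin : IsMinOn (fun x ↦ f x (relaxed x)) X xstar) (ystar : E) :
    ∀ x ∈ X, ∀ y ∈ response x,
      f xstar ystar ≤ f x y + L * (ρ + dist ystar (relaxed xstar)) := by
  intro x hx y hy
  refine (le_add_mul_dist_add_dist_of_isMinOn_relaxed hf hxstar hmin ystar hx y).trans ?_
  gcongr
  exact hprox x hx y hy

end MetricFollower

theorem dist_toLp_two_eq_sqrt {ι : Type*} [Fintype ι] (a b : ι → ℝ) :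
    dist (WithLp.toLp 2 a) (WithLp.toLp 2 b) = √(∑ i, (a - b) i ^ 2) := by
  simp only [EuclideanSpace.dist_eq, Real.dist_eq, sq_abs, Pi.sub_apply]

theorem lipschitzWith_const_add_comp_ofLp {p : ℝ≥0∞} {V : Type*} [PseudoMetricSpace (WithLp p V)]
    {d : V → ℝ} {L : ℝ≥0}
    (hd : ∀ a b, |d a - d b| ≤ L * dist (WithLp.toLp p a) (WithLp.toLp p b)) (r : ℝ) :
    LipschitzWith L fun y : WithLp p V ↦ r + d y.ofLp :=
  .of_dist_le_mul fun a b ↦ by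
    rw [dist_add_left]
    exact hd a.ofLp b.ofLp

/-- Ex-post approximation guarantee for the Relaxed Foresight Algorithm with a
convex quadratic integer follower: the leader's value obtained by the algorithm
exceeds the value of any bilevel-feasible leader–follower pair by at most
`L₂ * (ρ + ‖y* − ŷ(x*)‖₂)`, where `ρ` is an ℓ₂ proximity bound for `Q`. -/
theorem relaxed_foresight_ex_post_guarantee
    (nx ny : ℕ) (hnx : 0 < nx) (hny : 0 < ny)
    -- leader's feasible set (nonempty)
    (X : Set (Fin nx → ℝ)) (hX : X.Nonempty)
    -- leader's objective pieces
    (h : (Fin nx → ℝ) → ℝ) (dx : (Fin ny → ℝ) → ℝ)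
    -- ℓ₂ norm on the follower's space
    (norm2 : (Fin ny → ℝ) → ℝ)
    (hnorm2 : ∀ v, norm2 v = Real.sqrt (∑ i, (v i) ^ 2))
    -- `dx` is ℓ₂-Lipschitz with constant `L2 ≥ 0`
    (L2 : ℝ) (hL2 : 0 ≤ L2)
    (hLip : ∀ a b : Fin ny → ℝ, |dx a - dx b| ≤ L2 * norm2 (a - b))
    -- follower's data: symmetric positive definite `Q`, matrix `C`, vector `c`
    (Q : Matrix (Fin ny) (Fin ny) ℝ) (hQsymm : Q.IsSymm) (hQpd : Q.PosDef)
    (C : Matrix (Fin ny) (Fin nx) ℝ) (c : Fin ny → ℝ)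
    -- follower's objective
    (F : (Fin nx → ℝ) → (Fin ny → ℝ) → ℝ)
    (hF : ∀ x y, F x y = (1 / 2) * (y ⬝ᵥ Q.mulVec y) + (C.mulVec x + c) ⬝ᵥ y)
    -- continuous minimizer of the follower's problem
    (yhat : (Fin nx → ℝ) → (Fin ny → ℝ))
    (hyhat : ∀ x, yhat x = -(Q⁻¹.mulVec (C.mulVec x + c)))
    -- integer follower optimum predicate
    (IntOpt : (Fin nx → ℝ) → (Fin ny → ℝ) → Prop)
    (hIntOpt : ∀ x y, IntOpt x y ↔
      ((∀ i, ∃ w : ℤ, y i = (w : ℝ)) ∧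
        ∀ z : Fin ny → ℝ, (∀ i, ∃ w : ℤ, z i = (w : ℝ)) → F x y ≤ F x z))
    -- `ρ ≥ 0` is a proximity bound for `Q` in the ℓ₂ norm
    (ρ : ℝ) (hρ : 0 ≤ ρ)
    (hprox : ∀ c' : Fin ny → ℝ, ∀ v : Fin ny → ℝ,
      (∀ i, ∃ w : ℤ, v i = (w : ℝ)) →
      (∀ z : Fin ny → ℝ, (∀ i, ∃ w : ℤ, z i = (w : ℝ)) →
        (1 / 2) * (v ⬝ᵥ Q.mulVec v) + c' ⬝ᵥ v ≤
          (1 / 2) * (z ⬝ᵥ Q.mulVec z) + c' ⬝ᵥ z) →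
      norm2 (v + Q⁻¹.mulVec c') ≤ ρ)
    -- an integer follower optimum exists at every feasible leader decision
    (hexists : ∀ x ∈ X, ∃ y, IntOpt x y)
    -- `x*` is leader-optimal for the follower-relaxed problem
    (xstar : Fin nx → ℝ) (hxstarX : xstar ∈ X)
    (hxstarOpt : ∀ x ∈ X, h xstar + dx (yhat xstar) ≤ h x + dx (yhat x))
    -- `y*` is an integer follower optimum at `x*`
    (ystar : Fin ny → ℝ) (hystar : IntOpt xstar ystar) :
    ∀ x ∈ X, ∀ y : Fin ny → ℝ, IntOpt x y →
      h xstar + dx ystar ≤ h x + dx y + L2 * (ρ + norm2 (ystar - yhat xstar)) := by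
  have hdist (a b : Fin ny → ℝ) : norm2 (a - b) = dist (WithLp.toLp 2 a) (WithLp.toLp 2 b) := by
    rw [hnorm2, dist_toLp_two_eq_sqrt]
  have hnear (x : Fin nx → ℝ) (y : Fin ny → ℝ) (hy : IntOpt x y) :
      dist (WithLp.toLp 2 y) (WithLp.toLp 2 (yhat x)) ≤ ρ := by
    obtain ⟨hyint, hymin⟩ := (hIntOpt x y).1 hy
    simp only [hF] at hymin
    rw [← hdist, hyhat, sub_neg_eq_add]
    exact hprox _ y hyint hymin
  lift L2 to ℝ≥0 using hL2
  simp only [hdist] at hLip ⊢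
  intro x hx y hy
  exact relaxed_foresight_ex_post_guarantee_general
    (f := fun x y ↦ h x + dx y.ofLp) (relaxed := fun x ↦ WithLp.toLp 2 (yhat x))
    (response := fun x ↦ {y | IntOpt x y.ofLp})
    (fun x _ ↦ lipschitzWith_const_add_comp_ofLp hLip (h x)) (fun x _ y ↦ hnear x y.ofLp)
    hxstarX (isMinOn_iff.2 hxstarOpt) (WithLp.toLp 2 ystar) x hx (WithLp.toLp 2 y) hy
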